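/- Let P be a polytope, P' a subpolytope of P, and Σ a subdivision of P such that the tight-spans T(Σ) and T(Σ|_{P'}) are isomorphic (as posets). If Σ' is a subdivision of P coarsening Σ, then T(Σ') and T(Σ'|_{P'}) are isomorphic. -/

import Mathlib

open scoped Classical

section Subdivision

variable {E : Type*} [AddCommGroup E] [Module ℝ E]

/-- A polytope: the convex hull of a finite set of points. -/
def IsPolytope (P : Set E) : Prop := ∃ s : Finset E, P = convexHull ℝ (s : Set E)

/-- `F` is a face of `C`: a convex extreme subset. -/
def IsFaceOf (F C : Set E) : Prop := IsExtreme ℝ C F ∧ Convex ℝ F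

/-- A polytopal subdivision of a polytope `P`: a finite collection of nonempty polytopes
(cells), closed under taking (nonempty) faces, covering `P`, such that any two cells meet
in a common (possibly empty) face, and such that all vertices of cells are vertices of `P`. -/
structure IsSubdivision (P : Set E) (S : Set (Set E)) : Prop where
  finite : S.Finite
  nonempty_cell : ∀ C ∈ S, C.Nonempty
  poly : ∀ C ∈ S, IsPolytope C
  face_closed : ∀ C ∈ S, ∀ F, IsFaceOf F C → F.Nonempty → F ∈ S
  cover : ⋃₀ S = P
  inter_face : ∀ C ∈ S, ∀ D ∈ S, IsFaceOf (C ∩ D) C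
  vertices : ∀ C ∈ S, ∀ x ∈ Set.extremePoints ℝ C, x ∈ Set.extremePoints ℝ P

/-- A maximal cell of a collection of cells. -/
def MaximalCell (S : Set (Set E)) (C : Set E) : Prop :=
  C ∈ S ∧ ∀ D ∈ S, C ⊆ D → D = C

/-- The (relative) boundary of a polytope: the union of its proper faces. -/
def relBoundary (P : Set E) : Set E := ⋃₀ {F | IsFaceOf F P ∧ F ≠ P}

/-- The restriction `Σ|_{P'} = {S ∩ P' : S ∈ Σ}` of a subdivision to a subpolytope. -/
def restrictSubdiv (S : Set (Set E)) (P' : Set E) : Set (Set E) := (fun C => C ∩ P') '' S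

/-- `P'` is a subpolytope of `P`: the convex hull of a subset of the vertices of `P`. -/
def IsSubpolytope (P' P : Set E) : Prop :=
  ∃ W : Set E, W ⊆ Set.extremePoints ℝ P ∧ P' = convexHull ℝ W

/-- The tight-spans of `(P, S)` and `(P', S')` are isomorphic as posets: there is a
bijection between the interior cells (those not contained in the boundary) which is an
isomorphism for the partial order by reverse inclusion. -/
def TightSpanIso (P : Set E) (S : Set (Set E)) (P' : Set E) (S' : Set (Set E)) : Prop :=
  ∃ e : {C : Set E // C ∈ S ∧ ¬ C ⊆ relBoundary P} ≃
        {C : Set E // C ∈ S' ∧ ¬ C ⊆ relBoundary P'},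
    ∀ C D, C.1 ⊆ D.1 ↔ (e C).1 ⊆ (e D).1

/-- `S'` coarsens `S`: every cell of `S` is contained in some cell of `S'`. -/
def Coarsens (S S' : Set (Set E)) : Prop := ∀ C ∈ S, ∃ D ∈ S', C ⊆ D

/-- The trivial subdivision of a polytope: its collection of nonempty faces. -/
def trivialSubdiv (P : Set E) : Set (Set E) := {F | IsFaceOf F P ∧ F.Nonempty}

/-- A coarsest (non-trivial) subdivision: a non-trivial subdivision whose only proper
coarsening is the trivial subdivision. -/
def IsCoarsest (P : Set E) (S : Set (Set E)) : Prop :=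
  IsSubdivision P S ∧ S ≠ trivialSubdiv P ∧
    ∀ S', IsSubdivision P S' → Coarsens S S' → S' ≠ S → S' = trivialSubdiv P

end Subdivision

/-!
Every interior cell of `S|_{P'}` is the trace on `P'` of an interior cell of `S`. Indeed, let `q` be
a generic point of an interior cell `C₀ ∩ P'` and `C` a minimal interior cell of `S` through `q`. A
segment in `P'` from `y ∈ C ∩ P'` through `q` stays in `C` a little beyond `q`, and `C ∩ C₀` is a
face of `C`, so `y ∈ C₀`; hence `C ∩ P' = C₀ ∩ P'`.

So there are at most as many interior cells of `S|_{P'}` as of `S`, and when the two numbers agree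
the trace map `C ↦ C ∩ P'` is a bijection between them. For a coarsening `S'` the trace map is then
an order isomorphism on interior cells: suppose `C ∩ P' ⊆ D`, take `x` generic in `C`, and let `A`
be a cell of `S` with `x ∈ A ⊆ C`. Carrying out the first argument inside `D` yields an interior
cell `B ⊆ D` of `S` with the same trace as `A`, so `A = B ⊆ D` and `x ∈ D`, which forces `C ⊆ D`.
-/

section ConvexFaces

variable {E : Type*} [AddCommGroup E] [Module ℝ E] {A C F P : Set E}
  {a b p q u w x y z : E}

theorem IsFaceOf.inter_of_subset (hF : IsFaceOf F C) (hA : Convex ℝ A) (hAC : A ⊆ C) :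
    IsFaceOf (A ∩ F) A :=
  ⟨⟨Set.inter_subset_left, fun _ ha _ hb _ hz hzab =>
    ⟨ha, hF.1.2 (hAC ha) (hAC hb) hz.2 hzab⟩⟩, hA.inter hF.2⟩

theorem notMem_relBoundary_of_mem_openSegment (hx : x ∈ P) (hxP : x ∉ relBoundary P)
    (hy : y ∈ P) (hz : z ∈ openSegment ℝ x y) : z ∉ relBoundary P := by
  rintro ⟨F, ⟨hF, hne⟩, hzF⟩
  exact hxP ⟨F, ⟨hF, hne⟩, hF.1.2 hx hy hzF hz⟩

theorem openSegment_inter_openSegment_nonempty (hw : w ∈ openSegment ℝ y u)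
    (hq : q ∈ openSegment ℝ y p) : (openSegment ℝ q u ∩ openSegment ℝ w p).Nonempty := by
  obtain ⟨a, a', ha, ha', haa', rfl⟩ := hw
  obtain ⟨b, b', hb, hb', hbb', rfl⟩ := hq
  obtain rfl : a' = 1 - a := by linarith
  obtain rfl : b' = 1 - b := by linarith
  refine ⟨_, ⟨a / (a * (1 - b) + b), b * (1 - a) / (a * (1 - b) + b), by positivity,
    by positivity, by field_simp; ring, rfl⟩, ⟨b / (a * (1 - b) + b),
    a * (1 - b) / (a * (1 - b) + b), by positivity, by positivity, by field_simp; ring, ?_⟩⟩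
  match_scalars <;> field_simp

theorem exists_mem_openSegment_trans (hy : y ∈ openSegment ℝ a b) (hx : x ∈ openSegment ℝ y z) :
    ∃ w ∈ openSegment ℝ b z, x ∈ openSegment ℝ a w := by
  obtain ⟨s, t, hs, ht, hst, rfl⟩ := hx
  obtain ⟨c, d, hc, hd, hcd, rfl⟩ := hy
  refine ⟨_, ⟨s * d / (s * d + t), t / (s * d + t), by positivity, by positivity,
    by field_simp, rfl⟩, s * c, s * d + t, by positivity, by positivity,
    by linear_combination s * hcd + hst, ?_⟩
  match_scalars <;> field_simp

theorem mem_openSegment_of_mem_openSegment_left (hw : w ∈ openSegment ℝ y x)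
    (hx : x ∈ openSegment ℝ y z) : x ∈ openSegment ℝ w z := by
  obtain ⟨a, b, ha, hb, hab, hx⟩ := hx
  obtain ⟨c, d, hc, hd, hcd, rfl⟩ := hw
  refine ⟨a / (a * d + c), b * c / (a * d + c), by positivity, by positivity, ?_, ?_⟩
  · field_simp
    linear_combination c * hab - a * hcd
  · subst hx
    match_scalars <;> field_simp
    ring

theorem mem_openSegment_of_mem_openSegment_right (hx : x ∈ openSegment ℝ y z)
    (hw : w ∈ openSegment ℝ x z) : x ∈ openSegment ℝ y w := by
  rw [openSegment_symm] at hw hx ⊢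
  exact mem_openSegment_of_mem_openSegment_left hw hx

theorem isFaceOf_setOf_exists_mem_openSegment (hC : Convex ℝ C) (x : E) :
    IsFaceOf {y ∈ C | ∃ z ∈ C, x ∈ openSegment ℝ y z} C := by
  refine ⟨⟨Set.sep_subset _ _, ?_⟩, convex_iff_openSegment_subset.2 ?_⟩
  · rintro a ha b hb y ⟨-, z, hz, hx⟩ hy
    obtain ⟨w, hw, hxw⟩ := exists_mem_openSegment_trans hy hx
    exact ⟨ha, w, hC.openSegment_subset hb hz hw, hxw⟩
  · rintro y₁ ⟨hy₁, z₁, hz₁, hx₁⟩ y₂ ⟨hy₂, z₂, hz₂, hx₂⟩ y hy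
    obtain ⟨v, hvxy₁, hvyz₂⟩ := openSegment_inter_openSegment_nonempty
      (openSegment_symm ℝ y₁ y₂ ▸ hy) hx₂
    have hxv : x ∈ openSegment ℝ v z₁ :=
      mem_openSegment_of_mem_openSegment_left (openSegment_symm ℝ x y₁ ▸ hvxy₁) hx₁
    obtain ⟨w, hw, hxw⟩ := exists_mem_openSegment_trans hvyz₂ hxv
    exact ⟨hC.openSegment_subset hy₁ hy₂ hy, w, hC.openSegment_subset hz₂ hz₁ hw, hxw⟩

theorem exists_mem_openSegment_of_notMem_relBoundary (hC : Convex ℝ C) (hx : x ∈ C)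
    (hxC : x ∉ relBoundary C) (hy : y ∈ C) : ∃ z ∈ C, x ∈ openSegment ℝ y z := by
  have hface := isFaceOf_setOf_exists_mem_openSegment hC x
  have hxF : x ∈ {y ∈ C | ∃ z ∈ C, x ∈ openSegment ℝ y z} := ⟨hx, x, hx, by simp⟩
  have hF : {y ∈ C | ∃ z ∈ C, x ∈ openSegment ℝ y z} = C :=
    not_not.1 fun hne => hxC ⟨_, ⟨hface, hne⟩, hxF⟩
  exact (hF.ge hy).2

theorem exists_mem_forall_face_imp_subset {𝓕 : Set (Set E)} (hA : Convex ℝ A)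
    (h𝓕 : 𝓕.Finite) (hface : ∀ F ∈ 𝓕, IsFaceOf (A ∩ F) A) (hp : p ∈ A) :
    ∃ q ∈ A, (∀ F ∈ 𝓕, q ∈ F → A ⊆ F) ∧ ∀ F, IsExtreme ℝ A F → q ∈ F → p ∈ F := by
  obtain ⟨q, ⟨hqA, hqp⟩, hmin⟩ := Set.Finite.exists_minimalFor' (fun q => {F ∈ 𝓕 | q ∈ F})
    {q ∈ A | ∀ F, IsExtreme ℝ A F → q ∈ F → p ∈ F}
    (h𝓕.finite_subsets.subset (Set.image_subset_iff.2 fun q _ => Set.sep_subset _ _))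
    ⟨p, hp, fun _ _ h => h⟩
  refine ⟨q, hqA, fun F hF hqF y hyA => ?_, hqp⟩
  obtain ⟨m, hm⟩ : (openSegment ℝ q y).Nonempty := ⟨_, midpoint_mem_openSegment q y⟩
  have hmA : m ∈ A := hA.openSegment_subset hqA hyA hm
  have hm_subset : {G ∈ 𝓕 | m ∈ G} ⊆ {G ∈ 𝓕 | q ∈ G} := fun G hG =>
    ⟨hG.1, ((hface G hG.1).1.2 hqA hyA ⟨hmA, hG.2⟩ hm).2⟩
  have hmF : m ∈ F := (hmin ⟨hmA, fun G hG hmG => hqp G hG (hG.2 hqA hyA hmG hm)⟩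
    hm_subset ⟨hF, hqF⟩).2
  exact ((hface F hF).1.right_mem_of_mem_openSegment hqA hyA ⟨hmA, hmF⟩ hm).2

end ConvexFaces

section Polytopes

variable {E : Type*} [AddCommGroup E] [Module ℝ E] {C P P' : Set E} {T : Set (Set E)}
  {p q x y z : E}

theorem IsPolytope.convex (hC : IsPolytope C) : Convex ℝ C := by
  obtain ⟨s, rfl⟩ := hC
  exact convex_convexHull ℝ _

theorem IsSubpolytope.convex (hP' : IsSubpolytope P' P) : Convex ℝ P' := by
  obtain ⟨W, -, rfl⟩ := hP'
  exact convex_convexHull ℝ W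

theorem IsSubpolytope.subset (hP' : IsSubpolytope P' P) (hP : Convex ℝ P) : P' ⊆ P := by
  obtain ⟨W, hW, rfl⟩ := hP'
  exact convexHull_min (hW.trans extremePoints_subset) hP

-- `E` carries no topology: closedness is always that of a preimage in finite-dimensional space.
theorem isClosed_affineMap_preimage_singleton {V : Type*} [NormedAddCommGroup V]
    [NormedSpace ℝ V] [FiniteDimensional ℝ V] (f : V →ᵃ[ℝ] E) (c : E) : IsClosed (f ⁻¹' {c}) := by
  simpa using ((affineSpan ℝ {c}).comap f).closed_of_finiteDimensional

theorem IsPolytope.isClosed_preimage (hC : IsPolytope C) {V : Type*} [NormedAddCommGroup V]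
    [NormedSpace ℝ V] [FiniteDimensional ℝ V] (f : V →ᵃ[ℝ] E) : IsClosed (f ⁻¹' C) := by
  obtain ⟨s, rfl⟩ := hC
  let L : (s → ℝ) →ₗ[ℝ] E := Fintype.linearCombination ℝ (fun i : s => (i : E))
  let g : V × (s → ℝ) →ᵃ[ℝ] E :=
    f.comp (LinearMap.fst ℝ V _).toAffineMap - (L.comp (LinearMap.snd ℝ V _)).toAffineMap
  have hclosed : IsClosed {z : V × stdSimplex ℝ s | g (z.1, z.2.1) = 0} :=
    (isClosed_affineMap_preimage_singleton g 0).preimage (by fun_prop)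
  convert isClosedMap_fst_of_compactSpace _ hclosed using 1
  ext v
  rw [s.finite_toSet.convexHull_eq_image,
    Subsingleton.elim s.finite_toSet.fintype (Finset.fintypeCoeSort s)]
  simp [g, L, Fintype.linearCombination_apply, sub_eq_zero, eq_comm (a := f v)]

theorem isClosed_preimage_sUnion_isPolytope (hT : T.Finite) (hpoly : ∀ C ∈ T, IsPolytope C)
    {V : Type*} [NormedAddCommGroup V] [NormedSpace ℝ V] [FiniteDimensional ℝ V]
    (f : V →ᵃ[ℝ] E) : IsClosed (f ⁻¹' ⋃₀ T) := by
  rw [Set.preimage_sUnion]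
  exact hT.isClosed_biUnion fun C hC => (hpoly C hC).isClosed_preimage f

theorem zero_mem_of_isClosed_of_Ioo_subset {s : Set ℝ} (hs : IsClosed s)
    (h : Set.Ioo 0 1 ⊆ s) : (0 : ℝ) ∈ s :=
  hs.closure_subset_iff.2 h (by rw [closure_Ioo zero_ne_one]; exact Set.left_mem_Icc.2 zero_le_one)

theorem mem_sUnion_of_openSegment_subset (hT : T.Finite) (hpoly : ∀ C ∈ T, IsPolytope C)
    (h : openSegment ℝ q z ⊆ ⋃₀ T) : q ∈ ⋃₀ T := by
  simpa using zero_mem_of_isClosed_of_Ioo_subset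
    (isClosed_preimage_sUnion_isPolytope hT hpoly (AffineMap.lineMap q z))
    fun _ ht => h (lineMap_mem_openSegment ℝ q z ht)

theorem segment_inter_sUnion_nonempty (hT : T.Finite) (hpoly : ∀ C ∈ T, IsPolytope C)
    (h : ∀ p ∈ openSegment ℝ q z, (segment ℝ x p ∩ ⋃₀ T).Nonempty) :
    (segment ℝ x q ∩ ⋃₀ T).Nonempty := by
  let f : ℝ × ℝ →ᵃ[ℝ] E := ((LinearMap.toSpanSingleton ℝ E (q - x)).coprod
    (LinearMap.toSpanSingleton ℝ E (z - q))).toAffineMap + AffineMap.const ℝ _ x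
  have hf (t b : ℝ) : f (t, t * b) = AffineMap.lineMap x (AffineMap.lineMap q z b) t := by
    simp only [f, AffineMap.coe_add, Pi.add_apply, LinearMap.coe_toAffineMap,
      LinearMap.coprod_apply, LinearMap.toSpanSingleton_apply, AffineMap.coe_const,
      Function.const_apply, AffineMap.lineMap_apply_module]
    module
  have hclosed : IsClosed {r : unitInterval × ℝ | f (r.1, r.1 * r.2) ∈ ⋃₀ T} :=
    (isClosed_preimage_sUnion_isPolytope hT hpoly f).preimage
      (f := fun r : unitInterval × ℝ => ((r.1 : ℝ), (r.1 : ℝ) * r.2)) (by fun_prop)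
  have hsub : Set.Ioo 0 1 ⊆ Prod.snd '' {r : unitInterval × ℝ | f (r.1, r.1 * r.2) ∈ ⋃₀ T} := by
    intro b hb
    obtain ⟨_, hseg, hmem⟩ := h _ (lineMap_mem_openSegment ℝ q z hb)
    rw [segment_eq_image_lineMap] at hseg
    obtain ⟨t, ht, rfl⟩ := hseg
    exact ⟨(⟨t, ht⟩, b), by simpa only [Set.mem_ofPred_eq, hf] using hmem, rfl⟩
  obtain ⟨⟨t, b⟩, ht, rfl⟩ :=
    zero_mem_of_isClosed_of_Ioo_subset (isClosedMap_snd_of_compactSpace _ hclosed) hsub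
  refine ⟨_, lineMap_mem_segment ℝ x q t.2, ?_⟩
  simpa only [Set.mem_ofPred_eq, hf, AffineMap.lineMap_apply_zero] using ht

theorem IsPolytope.exists_segment_mem_relBoundary (hC : IsPolytope C) (hx : x ∈ C) (hy : y ∈ C)
    (hq : q ∈ C) (hp : p ∉ C) (hqyp : q ∈ openSegment ℝ y p) :
    ∃ w ∈ segment ℝ x p, w ∈ C ∧ w ∈ relBoundary C := by
  have hcompact : IsCompact (Set.Icc 0 1 ∩ AffineMap.lineMap x p ⁻¹' C : Set ℝ) :=
    isCompact_Icc.inter_right (hC.isClosed_preimage _)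
  obtain ⟨t, ⟨⟨ht, htC⟩, hmax⟩⟩ := hcompact.exists_isGreatest ⟨0, by simpa using hx⟩
  refine ⟨_, lineMap_mem_segment ℝ x p ht, htC, ?_⟩
  by_contra hw
  obtain ⟨u, hu, hwu⟩ := exists_mem_openSegment_of_notMem_relBoundary hC.convex htC hw hy
  obtain ⟨v, hvqu, hvwp⟩ := openSegment_inter_openSegment_nonempty hwu hqyp
  have hvC : v ∈ C := hC.convex.openSegment_subset hq hu hvqu
  rw [openSegment_eq_image_lineMap] at hvwp
  obtain ⟨s, ⟨hs0, hs1⟩, rfl⟩ := hvwp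
  have ht1 : t < 1 := ht.2.lt_of_ne (by rintro rfl; exact hp (by simpa using htC))
  rw [AffineMap.lineMap_lineMap_left] at hvC
  have := hmax ⟨⟨?_, ?_⟩, hvC⟩ <;> nlinarith [ht.1]

end Polytopes

section Subdivisions

variable {E : Type*} [AddCommGroup E] [Module ℝ E] {P P' : Set E} {S S' : Set (Set E)}
  {A C C₀ D K R : Set E} {q x y z : E}

/-- The interior cells of a collection `S` of subsets of `P`: the elements of the tight-span of
`(P, S)`. -/
def interiorCells (P : Set E) (S : Set (Set E)) : Set (Set E) :=
  {C | C ∈ S ∧ ¬ C ⊆ relBoundary P}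

theorem IsSubdivision.convex_cell (hS : IsSubdivision P S) (hC : C ∈ S) : Convex ℝ C :=
  (hS.poly C hC).convex

theorem IsSubdivision.cell_subset (hS : IsSubdivision P S) (hC : C ∈ S) : C ⊆ P :=
  hS.cover ▸ Set.subset_sUnion_of_mem hC

theorem IsSubdivision.isFaceOf_inter (hS : IsSubdivision P S) (hC : C ∈ S) (hD : D ∈ S)
    (hA : Convex ℝ A) (hAC : A ⊆ C) : IsFaceOf (A ∩ D) A := by
  have h := (hS.inter_face C hC D hD).inter_of_subset hA hAC
  rwa [← Set.inter_assoc, Set.inter_eq_left.2 hAC] at h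

theorem IsSubdivision.finite_setOf_isFaceOf (hS : IsSubdivision P S) :
    {F | IsFaceOf F P}.Finite := by
  refine (hS.finite.finite_subsets.image Set.sUnion).subset fun F hF =>
    ⟨{C ∈ S | C ⊆ F}, Set.sep_subset _ _, (Set.sUnion_subset fun C hC => hC.2).antisymm ?_⟩
  intro x hx
  obtain ⟨C, hC, hxC⟩ := hS.cover.ge (hF.1.1 hx)
  have hface := hF.inter_of_subset (hS.convex_cell hC) (hS.cell_subset hC)
  exact ⟨C ∩ F, ⟨hS.face_closed C hC _ hface ⟨x, hxC, hx⟩, Set.inter_subset_right⟩, hxC, hx⟩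

theorem IsSubdivision.not_subset_relBoundary (hS : IsSubdivision P S) (hP : Convex ℝ P)
    (hne : P.Nonempty) : ¬ P ⊆ relBoundary P := by
  obtain ⟨q, hqP, hq, -⟩ := exists_mem_forall_face_imp_subset hP hS.finite_setOf_isFaceOf
    (fun F hF => hF.inter_of_subset hP subset_rfl) hne.some_mem
  intro h
  obtain ⟨F, ⟨hF, hFP⟩, hqF⟩ := h hqP
  exact hFP (hF.1.1.antisymm (hq F hF hqF))

theorem IsSubdivision.exists_mem_forall_cell_imp_subset (hS : IsSubdivision P S) (hC : C ∈ S)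
    (hA : Convex ℝ A) (hAC : A ⊆ C) (hAR : A ⊆ R) (hint : ¬ A ⊆ relBoundary R) :
    ∃ q ∈ A, q ∉ relBoundary R ∧ ∀ D ∈ S, q ∈ D → A ⊆ D := by
  obtain ⟨p, hpA, hpR⟩ := Set.not_subset.1 hint
  obtain ⟨q, hqA, hq, hqp⟩ := exists_mem_forall_face_imp_subset hA hS.finite
    (fun D hD => hS.isFaceOf_inter hC hD hA hAC) hpA
  refine ⟨q, hqA, ?_, hq⟩
  rintro ⟨F, ⟨hF, hFR⟩, hqF⟩
  exact hpR ⟨F, ⟨hF, hFR⟩, (hqp _ (hF.inter_of_subset hA hAR).1 ⟨hqA, hqF⟩).2⟩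

theorem IsSubdivision.exists_interiorCell_subset (hS : IsSubdivision P S) (hK : Convex ℝ K)
    (hKS : ∀ x ∈ K, ∃ C ∈ S, x ∈ C ∧ C ⊆ K) (hint : ¬ K ⊆ relBoundary P) (hq : q ∈ K) :
    ∃ C ∈ interiorCells P S, q ∈ C ∧ C ⊆ K := by
  have hKP : K ⊆ P := fun x hx =>
    let ⟨_, hC, hxC, _⟩ := hKS x hx
    hS.cell_subset hC hxC
  obtain ⟨z, hzK, hzP⟩ := Set.not_subset.1 hint
  suffices openSegment ℝ q z ⊆ ⋃₀ {C ∈ interiorCells P S | C ⊆ K} by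
    obtain ⟨C, ⟨hC, hCK⟩, hqC⟩ := mem_sUnion_of_openSegment_subset
      (hS.finite.subset fun C hC => hC.1.1) (fun C hC => hS.poly C hC.1.1) this
    exact ⟨C, hC, hqC, hCK⟩
  intro x hx
  obtain ⟨C, hC, hxC, hCK⟩ := hKS x (hK.openSegment_subset hq hzK hx)
  have hxP : x ∉ relBoundary P := notMem_relBoundary_of_mem_openSegment (hKP hzK) hzP (hKP hq)
    (openSegment_symm ℝ q z ▸ hx)
  exact ⟨C, ⟨⟨hC, fun h => hxP (h hxC)⟩, hCK⟩, hxC⟩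

theorem IsSubdivision.exists_mem_openSegment_of_minimal (hS : IsSubdivision P S)
    (hP : Convex ℝ P) (hC : Minimal (fun D => D ∈ interiorCells P S ∧ q ∈ D) C)
    (hy : y ∈ C) (hz : z ∈ P) (hq : q ∈ openSegment ℝ y z) : ∃ p ∈ openSegment ℝ q z, p ∈ C := by
  -- Otherwise the segments from a generic `x ∈ C` to points of `openSegment ℝ q z` leave `C`
  -- through smaller interior cells, so in the limit one such cell meets `segment ℝ x q`.
  by_contra! hout
  obtain ⟨⟨⟨hCS, hCint⟩, hqC⟩, hCmin⟩ := hC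
  obtain ⟨x, hxC, hxP, hx⟩ := hS.exists_mem_forall_cell_imp_subset hCS (hS.convex_cell hCS)
    subset_rfl (hS.cell_subset hCS) hCint
  let T : Set (Set E) := {D ∈ interiorCells P S | D ⊂ C}
  obtain ⟨w, hw, D, ⟨hD, hDC⟩, hwD⟩ : (segment ℝ x q ∩ ⋃₀ T).Nonempty := by
    refine segment_inter_sUnion_nonempty (z := z) (hS.finite.subset fun D hD => hD.1.1)
      (fun D hD => hS.poly D hD.1.1) fun p hp => ?_
    have hpP : p ∈ P := hP.openSegment_subset (hS.cell_subset hCS hqC) hz hp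
    have hqyp : q ∈ openSegment ℝ y p := mem_openSegment_of_mem_openSegment_right hq hp
    obtain ⟨w, hw, hwC, F, ⟨hF, hFC⟩, hwF⟩ :=
      (hS.poly C hCS).exists_segment_mem_relBoundary hxC hy hqC (hout p hp) hqyp
    have hFS : F ∈ S := hS.face_closed C hCS F hF ⟨w, hwF⟩
    have hxF : x ∉ F := fun h => hFC (hF.1.1.antisymm (hx F hFS h))
    have hwxp : w ∈ openSegment ℝ x p := mem_openSegment_of_ne_left_right
      (ne_of_mem_of_not_mem hwF hxF).symm (ne_of_mem_of_not_mem hwC (hout p hp)).symm hw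
    have hwP := notMem_relBoundary_of_mem_openSegment (hS.cell_subset hCS hxC) hxP hpP hwxp
    exact ⟨w, hw, F, ⟨⟨hFS, fun h => hwP (h hwF)⟩, hF.1.1.ssubset_of_ne hFC⟩, hwF⟩
  have hxD : x ∉ D := fun h => hDC.2 (hx D hD.1 h)
  have hqD : q ∉ D := fun h => hDC.2 (hCmin ⟨hD, h⟩ hDC.1)
  have hwxq : w ∈ openSegment ℝ x q := mem_openSegment_of_ne_left_right
    (ne_of_mem_of_not_mem hwD hxD).symm (ne_of_mem_of_not_mem hwD hqD).symm hw
  exact hxD ((hS.inter_face C hCS D hD.1).1.2 hxC hqC ⟨hDC.1 hwD, hwD⟩ hwxq).2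

theorem IsSubdivision.inter_subset_of_minimal (hS : IsSubdivision P S) (hP : Convex ℝ P)
    (hP' : Convex ℝ P') (hP'P : P' ⊆ P) (hqP' : q ∈ P') (hq : q ∉ relBoundary P')
    (hC : Minimal (fun D => D ∈ interiorCells P S ∧ q ∈ D) C) (hD : D ∈ S) (hqD : q ∈ D) :
    C ∩ P' ⊆ D := by
  rintro y ⟨hyC, hyP'⟩
  obtain ⟨z, hzP', hqyz⟩ := exists_mem_openSegment_of_notMem_relBoundary hP' hqP' hq hyP'
  obtain ⟨p, hp, hpC⟩ := hS.exists_mem_openSegment_of_minimal hP hC hyC (hP'P hzP') hqyz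
  have hqyp : q ∈ openSegment ℝ y p := mem_openSegment_of_mem_openSegment_right hqyz hp
  exact ((hS.inter_face C hC.prop.1.1 D hD).1.2 hyC hpC ⟨hC.prop.2, hqD⟩ hqyp).2

theorem IsSubdivision.exists_interiorCell_inter_eq (hS : IsSubdivision P S) (hP : Convex ℝ P)
    (hP' : Convex ℝ P') (hP'P : P' ⊆ P) (hC₀ : C₀ ∈ S) (hC₀int : ¬ C₀ ∩ P' ⊆ relBoundary P')
    (hK : Convex ℝ K) (hKS : ∀ x ∈ K, ∃ C ∈ S, x ∈ C ∧ C ⊆ K) (hKint : ¬ K ⊆ relBoundary P)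
    (hC₀K : C₀ ∩ P' ⊆ K) : ∃ C ∈ interiorCells P S, C ⊆ K ∧ C ∩ P' = C₀ ∩ P' := by
  obtain ⟨q, hqC₀, hqP', hq⟩ := hS.exists_mem_forall_cell_imp_subset hC₀
    ((hS.convex_cell hC₀).inter hP') Set.inter_subset_left Set.inter_subset_right hC₀int
  obtain ⟨B, hB, hqB, hBK⟩ := hS.exists_interiorCell_subset hK hKS hKint (hC₀K hqC₀)
  have hfin : {C | C ∈ interiorCells P S ∧ q ∈ C}.Finite := hS.finite.subset fun C hC => hC.1.1
  obtain ⟨C, hCB, hC⟩ := hfin.exists_le_minimal ⟨hB, hqB⟩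
  refine ⟨C, hC.prop.1, hCB.trans hBK, Set.Subset.antisymm
    (Set.subset_inter ?_ Set.inter_subset_right)
    (Set.subset_inter (hq C hC.prop.1.1 hC.prop.2) Set.inter_subset_right)⟩
  exact hS.inter_subset_of_minimal hP hP' hP'P hqC₀.2 hqP' hC hC₀ hqC₀.1

theorem IsSubdivision.interiorCells_restrictSubdiv_subset (hS : IsSubdivision P S)
    (hP : Convex ℝ P) (hP' : Convex ℝ P') (hP'P : P' ⊆ P) :
    interiorCells P' (restrictSubdiv S P') ⊆ (· ∩ P') '' interiorCells P S := by
  rintro _ ⟨⟨C₀, hC₀, rfl⟩, hint⟩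
  have hne : P.Nonempty := (Set.not_subset.1 hint).imp fun x hx => hP'P hx.1.2
  obtain ⟨C, hC, -, hCC₀⟩ := hS.exists_interiorCell_inter_eq hP hP' hP'P hC₀ hint hP
    (fun x hx => let ⟨C, hC, hxC⟩ := hS.cover.ge hx; ⟨C, hC, hxC, hS.cell_subset hC⟩)
    (hS.not_subset_relBoundary hP hne) (Set.inter_subset_right.trans hP'P)
  exact ⟨C, hC, hCC₀⟩

theorem IsSubdivision.bijOn_inter_of_ncard_le (hS : IsSubdivision P S) (hP : Convex ℝ P)
    (hP' : Convex ℝ P') (hP'P : P' ⊆ P)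
    (hcard : (interiorCells P S).ncard ≤ (interiorCells P' (restrictSubdiv S P')).ncard) :
    Set.BijOn (· ∩ P') (interiorCells P S) (interiorCells P' (restrictSubdiv S P')) := by
  have hfin : (interiorCells P S).Finite := hS.finite.subset fun C hC => hC.1
  have hsub := hS.interiorCells_restrictSubdiv_subset hP hP' hP'P
  have himage : interiorCells P' (restrictSubdiv S P') = (· ∩ P') '' interiorCells P S :=
    Set.eq_of_subset_of_ncard_le hsub ((Set.ncard_image_le hfin).trans hcard) (hfin.image _)
  rw [himage] at hcard ⊢
  exact (Set.injOn_of_ncard_image_eq ((Set.ncard_image_le hfin).antisymm hcard) hfin).bijOn_image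

theorem tightSpanIso_of_bijOn {f : Set E → Set E}
    (hf : Set.BijOn f (interiorCells P S) (interiorCells P' S'))
    (hmono : ∀ C ∈ interiorCells P S, ∀ D ∈ interiorCells P S, C ⊆ D ↔ f C ⊆ f D) :
    TightSpanIso P S P' S' :=
  ⟨hf.equiv f, fun C D => hmono C C.2 D D.2⟩

theorem Coarsens.exists_cell_subset (hco : Coarsens S S') (hS : IsSubdivision P S)
    (hS' : IsSubdivision P S') (hC : C ∈ S') (hx : x ∈ C) : ∃ D ∈ S, x ∈ D ∧ D ⊆ C := by
  obtain ⟨G, hG, hxG⟩ := hS.cover.ge (hS'.cell_subset hC hx)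
  have hfin : {D | D ∈ S ∧ x ∈ D}.Finite := hS.finite.subset fun D hD => hD.1
  obtain ⟨D, ⟨hD, hxD⟩, hmin⟩ := hfin.exists_minimal ⟨G, hG, hxG⟩
  obtain ⟨B, hB, hDB⟩ := hco D hD
  have hface : IsFaceOf (D ∩ C) D := hS'.isFaceOf_inter hB hC (hS.convex_cell hD) hDB
  have hDC : D ∩ C ∈ S := hS.face_closed D hD _ hface ⟨x, hxD, hx⟩
  exact ⟨D, hD, hxD, (hmin ⟨hDC, hxD, hx⟩ Set.inter_subset_left).trans Set.inter_subset_right⟩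

theorem Coarsens.mapsTo_inter (hco : Coarsens S S') (hS : IsSubdivision P S)
    (hS' : IsSubdivision P S') (htrace : Set.MapsTo (· ∩ P') (interiorCells P S)
      (interiorCells P' (restrictSubdiv S P'))) :
    Set.MapsTo (· ∩ P') (interiorCells P S') (interiorCells P' (restrictSubdiv S' P')) := by
  rintro C ⟨hC, hCint⟩
  obtain ⟨x, hxC, hxP⟩ := Set.not_subset.1 hCint
  obtain ⟨A, hA, hxA, hAC⟩ := hco.exists_cell_subset hS hS' hC hxC
  have hAint : ¬ A ∩ P' ⊆ relBoundary P' := (htrace ⟨hA, fun h => hxP (h hxA)⟩).2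
  exact ⟨⟨C, hC, rfl⟩, fun h => hAint ((Set.inter_subset_inter_left P' hAC).trans h)⟩

theorem Coarsens.subset_of_inter_subset (hco : Coarsens S S') (hS : IsSubdivision P S)
    (hS' : IsSubdivision P S') (hP : Convex ℝ P) (hP' : Convex ℝ P') (hP'P : P' ⊆ P)
    (htrace : Set.BijOn (· ∩ P') (interiorCells P S) (interiorCells P' (restrictSubdiv S P')))
    (hC : C ∈ interiorCells P S') (hD : D ∈ interiorCells P S') (hCD : C ∩ P' ⊆ D) : C ⊆ D := by
  obtain ⟨x, hxC, hxP, hx⟩ := hS'.exists_mem_forall_cell_imp_subset hC.1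
    (hS'.convex_cell hC.1) subset_rfl (hS'.cell_subset hC.1) hC.2
  obtain ⟨A, hA, hxA, hAC⟩ := hco.exists_cell_subset hS hS' hC.1 hxC
  have hAint : A ∈ interiorCells P S := ⟨hA, fun h => hxP (h hxA)⟩
  obtain ⟨B, hB, hBD, hBA⟩ := hS.exists_interiorCell_inter_eq hP hP' hP'P hA
    (htrace.mapsTo hAint).2 (hS'.convex_cell hD.1)
    (fun _ => hco.exists_cell_subset hS hS' hD.1) hD.2
    ((Set.inter_subset_inter_left P' hAC).trans hCD)
  obtain rfl : B = A := htrace.injOn hB hAint hBA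
  exact hx D hD.1 (hBD hxA)

end Subdivisions

theorem tightSpanIso_of_coarsening_general {E : Type*} [AddCommGroup E] [Module ℝ E]
    {P P' : Set E} {S S' : Set (Set E)} (hP : Convex ℝ P) (hP' : Convex ℝ P') (hP'P : P' ⊆ P)
    (hS : IsSubdivision P S)
    (hcard : (interiorCells P S).ncard ≤ (interiorCells P' (restrictSubdiv S P')).ncard)
    (hS' : IsSubdivision P S') (hco : Coarsens S S') :
    TightSpanIso P S' P' (restrictSubdiv S' P') := by
  have htrace := hS.bijOn_inter_of_ncard_le hP hP' hP'P hcard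
  have hmono : ∀ C ∈ interiorCells P S', ∀ D ∈ interiorCells P S', C ⊆ D ↔ C ∩ P' ⊆ D ∩ P' :=
    fun C hC D hD => ⟨Set.inter_subset_inter_left P', fun h =>
      hco.subset_of_inter_subset hS hS' hP hP' hP'P htrace hC hD (h.trans Set.inter_subset_left)⟩
  have hinj : Set.InjOn (· ∩ P') (interiorCells P S') := fun C hC D hD h =>
    ((hmono C hC D hD).2 h.subset).antisymm ((hmono D hD C hC).2 h.superset)
  exact tightSpanIso_of_bijOn ⟨hco.mapsTo_inter hS hS' htrace.mapsTo, hinj,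
    hS'.interiorCells_restrictSubdiv_subset hP hP' hP'P⟩ hmono

/-- Let `P'` be a subpolytope of a polytope `P` and `S` a subdivision of `P` whose
tight-span is isomorphic to that of `S|_{P'}`.  If `S'` is a subdivision of `P`
coarsening `S`, then the tight-spans of `S'` and `S'|_{P'}` are isomorphic. -/
theorem tightSpanIso_of_coarsening {E : Type*} [AddCommGroup E] [Module ℝ E]
    (P P' : Set E) (hP : IsPolytope P) (hP' : IsSubpolytope P' P)
    (S : Set (Set E)) (hS : IsSubdivision P S)
    (hiso : TightSpanIso P S P' (restrictSubdiv S P'))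
    (S' : Set (Set E)) (hS' : IsSubdivision P S') (hco : Coarsens S S') :
    TightSpanIso P S' P' (restrictSubdiv S' P') :=
  let ⟨e, _⟩ := hiso
  tightSpanIso_of_coarsening_general hP.convex hP'.convex (hP'.subset hP.convex) hS
    (Set.ncard_congr' e).le hS' hco
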